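/- arXiv:1103.0709 — 2 statements merged into one kernel-verified Lean document; each statement's English description precedes it below -/
import Mathlib

section
/- The four polynomials 1 + X + X^2, 1 + X^3, 1 + X^2 + X^4, and 1 + X are each irreducible in the semiring of polynomials with nonnegative integer coefficients; that is, whenever any of them is written as a product of two polynomials with nonnegative integer coefficients, one of the factors is the constant 1. -/
open Polynomial

def NNcoeff (P : Polynomial ℤ) : Prop := ∀ n, 0 ≤ P.coeff n

def IrredNN (P : Polynomial ℤ) : Prop :=
  NNcoeff P ∧ P ≠ 1 ∧
    ∀ S T : Polynomial ℤ, NNcoeff S → NNcoeff T → P = S * T → S = 1 ∨ T = 1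

theorem nn_eval_one_nonneg (S : Polynomial ℤ) (h : NNcoeff S) : 0 ≤ S.eval 1 := by
  rw [eval_eq_sum_range]
  exact Finset.sum_nonneg fun i _ => by simpa using h i

/-- A polynomial with nonnegative coefficients, value 1 at 1 and constant term 1 is 1. -/
theorem nn_eq_one (S : Polynomial ℤ) (h : NNcoeff S) (h1 : S.eval 1 = 1)
    (h0 : S.coeff 0 = 1) : S = 1 := by
  ext n
  rw [coeff_one]
  rcases Nat.eq_zero_or_pos n with rfl | hn
  · simpa using h0
  · rw [if_neg (by omega)]
    by_cases hd : n ≤ S.natDegree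
    · rw [eval_eq_sum_range, Finset.sum_range_succ'] at h1
      simp only [one_pow, mul_one, h0] at h1
      have hz : ∑ i ∈ Finset.range S.natDegree, S.coeff (i + 1) = 0 := by linarith
      rw [Finset.sum_eq_zero_iff_of_nonneg (fun i _ => h (i + 1))] at hz
      have := hz (n - 1) (Finset.mem_range.2 (by omega))
      rwa [Nat.sub_add_cancel hn] at this
    · exact coeff_eq_zero_of_natDegree_lt (by omega)

/-- Prime value at 1 and constant term 1 force irreducibility. -/
theorem irredNN_of_prime (P : Polynomial ℤ) (h : NNcoeff P) (hp : Prime (P.eval 1))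
    (h0 : P.coeff 0 = 1) : IrredNN P := by
  refine ⟨h, ?_, ?_⟩
  · rintro rfl
    simp at hp
  · intro S T hS hT hP
    have hc : S.coeff 0 * T.coeff 0 = 1 := by rw [← mul_coeff_zero, ← hP, h0]
    have hS0 : S.coeff 0 = 1 := Int.eq_one_of_mul_eq_one_right (hS 0) hc
    have hT0 : T.coeff 0 = 1 := Int.eq_one_of_mul_eq_one_left (hT 0) hc
    have he : P.eval 1 = S.eval 1 * T.eval 1 := by rw [hP, eval_mul]
    rcases hp.irreducible.isUnit_or_isUnit he with hu | hu
    · left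
      refine nn_eq_one S hS ?_ hS0
      have := nn_eval_one_nonneg S hS
      rcases Int.isUnit_iff.1 hu with h | h <;> omega
    · right
      refine nn_eq_one T hT ?_ hT0
      have := nn_eval_one_nonneg T hT
      rcases Int.isUnit_iff.1 hu with h | h <;> omega

theorem stmt2 :
    IrredNN (1 + X + X ^ 2) ∧ IrredNN (1 + X ^ 3) ∧
    IrredNN (1 + X ^ 2 + X ^ 4) ∧ IrredNN (1 + X) := by
  refine ⟨irredNN_of_prime _ ?_ ?_ ?_, irredNN_of_prime _ ?_ ?_ ?_,
    irredNN_of_prime _ ?_ ?_ ?_, irredNN_of_prime _ ?_ ?_ ?_⟩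
  all_goals first
    | (intro n
       simp only [coeff_add, coeff_one, coeff_X, coeff_X_pow]
       positivity)
    | (norm_num [coeff_one, coeff_X, coeff_X_pow]; done)
    | (norm_num [Int.prime_iff_natAbs_prime]; done)
end

section
/- Let P ∈ ℤ[X] with nonnegative coefficients, nonzero constant term, and P(1) = 8. Then P factors uniquely into irreducibles in the monoid of polynomials with nonnegative integer coefficients, up to ordering of the factors. -/
open Polynomial

/-- The polynomial attached to a list of exponents. -/
noncomputable def polyOf (l : List ℕ) : Polynomial ℤ := (l.map (fun i => (X : ℤ[X]) ^ i)).sum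

theorem polyOf_nil : polyOf [] = 0 := by simp [polyOf]

theorem polyOf_cons (a : ℕ) (l : List ℕ) : polyOf (a :: l) = X ^ a + polyOf l := by simp [polyOf]

theorem polyOf_coeff (l : List ℕ) (n : ℕ) : (polyOf l).coeff n = (l.count n : ℤ) := by
  induction l with
  | nil => simp [polyOf]
  | cons a l ih =>
    rw [polyOf_cons, coeff_add, ih, coeff_X_pow, List.count_cons]
    by_cases h : n = a
    · subst h; simp [add_comm]
    · have : ¬ a = n := fun h' => h h'.symm
      simp [h, this]

theorem polyOf_inj {l l' : List ℕ} (h : polyOf l = polyOf l') : l.Perm l' := by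
  rw [List.perm_iff_count]
  intro n
  have := congrArg (fun p => p.coeff n) h
  simp only [polyOf_coeff] at this
  exact_mod_cast this

theorem polyOf_perm {l l' : List ℕ} (h : l.Perm l') : polyOf l = polyOf l' := by
  unfold polyOf
  exact (h.map _).sum_eq

theorem nn_polyOf (l : List ℕ) : NNcoeff (polyOf l) := by
  intro n; rw [polyOf_coeff]; positivity

theorem eval_one_sum (P : ℤ[X]) : P.eval 1 = ∑ i ∈ P.support, P.coeff i := by
  rw [eval_eq_sum, Polynomial.sum]; simp

theorem exists_polyOf (n : ℕ) : ∀ P : ℤ[X], NNcoeff P → P.eval 1 = n →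
    ∃ l : List ℕ, l.length = n ∧ P = polyOf l := by
  induction n with
  | zero =>
    intro P hP h
    refine ⟨[], rfl, ?_⟩
    rw [polyOf_nil]
    by_contra hne
    rw [eval_one_sum] at h
    have h2 := (Finset.sum_eq_zero_iff_of_nonneg (fun i _ => hP i)).1 (by simpa using h)
    obtain ⟨k, hk⟩ := Polynomial.support_nonempty.2 hne
    exact (mem_support_iff.1 hk) (h2 k hk)
  | succ n ih =>
    intro P hP h
    have hne : P ≠ 0 := by
      rintro rfl
      simp at h
      omega
    obtain ⟨k, hk⟩ := Polynomial.support_nonempty.2 hne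
    have hk' := mem_support_iff.1 hk
    obtain ⟨l, hl, hl'⟩ := ih (P - X ^ k) (by
      intro m
      rw [coeff_sub, coeff_X_pow]
      have := hP m
      split_ifs with hm
      · subst hm; omega
      · omega) (by simp [h])
    exact ⟨k :: l, by simp [hl], by rw [polyOf_cons, ← hl']; ring⟩

theorem exists_sorted (n : ℕ) (P : ℤ[X]) (hP : NNcoeff P) (h : P.eval 1 = n) :
    ∃ l : List ℕ, l.length = n ∧ l.Pairwise (· ≤ ·) ∧ P = polyOf l := by
  obtain ⟨l, hl, hl'⟩ := exists_polyOf n P hP h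
  refine ⟨l.insertionSort (· ≤ ·), by simp [hl], List.pairwise_insertionSort _ _, ?_⟩
  rw [hl']
  exact polyOf_perm (List.perm_insertionSort _ _).symm

theorem head_zero (a : ℕ) (l : List ℕ) (hs : (a :: l).Pairwise (· ≤ ·))
    (h : (polyOf (a :: l)).coeff 0 ≠ 0) : a = 0 := by
  rw [polyOf_coeff] at h
  have : 0 ∈ a :: l := by
    rw [← List.count_pos_iff]
    have : (a :: l).count 0 ≠ 0 := by exact_mod_cast h
    omega
  rcases List.mem_cons.1 this with h | h
  · exact h.symm
  · have := (List.pairwise_cons.1 hs).1 0 h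
    omega

theorem form2 (P : ℤ[X]) (hP : NNcoeff P) (h : P.eval 1 = 2) (h0 : P.coeff 0 ≠ 0) :
    ∃ a : ℕ, P = 1 + X ^ a := by
  obtain ⟨l, hl, hs, rfl⟩ := exists_sorted 2 P hP (by simpa using h)
  obtain ⟨x, y, rfl⟩ := List.length_eq_two.1 hl
  obtain rfl := head_zero _ _ hs h0
  exact ⟨y, by simp [polyOf]⟩

theorem form4 (P : ℤ[X]) (hP : NNcoeff P) (h : P.eval 1 = 4) (h0 : P.coeff 0 ≠ 0) :
    ∃ x y z : ℕ, x ≤ y ∧ y ≤ z ∧ P = polyOf [0, x, y, z] := by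
  obtain ⟨l, hl, hs, rfl⟩ := exists_sorted 4 P hP (by simpa using h)
  match l, hl with
  | [t, x, y, z], _ =>
    obtain rfl := head_zero _ _ hs h0
    simp at hs
    exact ⟨x, y, z, hs.1.1, hs.2, rfl⟩

/-- Sorted merge of two explicit lists, as a sorted list. -/
theorem merge_eq {l₁ l₂ m₁ m₂ : List ℕ}
    (h1 : l₁.Pairwise (· ≤ ·)) (h2 : l₂.Pairwise (· ≤ ·))
    (h3 : m₁.Pairwise (· ≤ ·)) (h4 : m₂.Pairwise (· ≤ ·))
    (h : (l₁ ++ l₂).Perm (m₁ ++ m₂)) : 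
    ∃ L : List ℕ, L.Pairwise (· ≤ ·) ∧ List.merge l₁ l₂ = L ∧ List.merge m₁ m₂ = L := by
  have s : ∀ {l₁ l₂ : List ℕ}, l₁.Pairwise (· ≤ ·) → l₂.Pairwise (· ≤ ·) →
      (List.merge l₁ l₂).Pairwise (· ≤ ·) := by
    intro l₁ l₂ h1 h2
    have := List.pairwise_merge (le := fun a b : ℕ => decide (a ≤ b))
      (fun a b c => by simpa using le_trans) (fun a b => by simpa using le_total a b)
      l₁ l₂ (by simpa using h1) (by simpa using h2)
    simpa using this
  refine ⟨_, s h1 h2, rfl, ?_⟩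
  refine List.Perm.eq_of_pairwise (le := (· ≤ ·)) (fun a b _ _ => le_antisymm) (s h3 h4) (s h1 h2) ?_
  exact (List.merge_perm_append _).trans (h.symm.trans (List.merge_perm_append _).symm)

theorem merge_cases {a x y z : ℕ} (hxy : x ≤ y) (hyz : y ≤ z)
    {L : List ℕ} (h : List.merge [0, x, y, z] [a, a + x, a + y, a + z] = L) :
    L = [0, x, y, z, a, a + x, a + y, a + z] ∨
    L = [0, x, y, a, z, a + x, a + y, a + z] ∨
    L = [0, x, y, a, a + x, z, a + y, a + z] ∨
    L = [0, x, y, a, a + x, a + y, z, a + z] ∨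
    L = [0, x, a, y, z, a + x, a + y, a + z] ∨
    L = [0, x, a, y, a + x, z, a + y, a + z] ∨
    L = [0, x, a, y, a + x, a + y, z, a + z] ∨
    L = [0, x, a, a + x, y, z, a + y, a + z] ∨
    L = [0, x, a, a + x, y, a + y, z, a + z] ∨
    L = [0, a, x, y, z, a + x, a + y, a + z] ∨
    L = [0, a, x, y, a + x, z, a + y, a + z] ∨
    L = [0, a, x, y, a + x, a + y, z, a + z] ∨
    L = [0, a, x, a + x, y, z, a + y, a + z] ∨
    L = [0, a, x, a + x, y, a + y, z, a + z] := by
  subst h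
  simp only [List.merge, decide_eq_true_eq]
  split_ifs <;> first | omega | simp

set_option maxHeartbeats 4000000 in
theorem combi {a x y z b u v w : ℕ} (hxy : x ≤ y) (hyz : y ≤ z) (huv : u ≤ v) (hvw : v ≤ w)
    (hp : ([0, x, y, z] ++ [a, a + x, a + y, a + z]).Perm
      ([0, u, v, w] ++ [b, b + u, b + v, b + w])) (hab : a ≠ b) :
    z = x + y ∧ w = u + v ∧
      ((x = b ∧ u = a ∧ y = v) ∨ (x = b ∧ v = a ∧ y = u) ∨
       (y = b ∧ u = a ∧ x = v) ∨ (y = b ∧ v = a ∧ x = u)) := by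
  obtain ⟨L, -, h1, h2⟩ := merge_eq (by simp; omega) (by simp; omega) (by simp; omega)
    (by simp; omega) hp
  have k1 := merge_cases hxy hyz h1
  have k2 := merge_cases huv hvw h2
  clear h1 h2 hp
  rcases k1 with rfl | rfl | rfl | rfl | rfl | rfl | rfl | rfl | rfl | rfl | rfl | rfl | rfl | rfl <;>
  rcases k2 with h | h | h | h | h | h | h | h | h | h | h | h | h | h <;>
  simp only [List.cons.injEq, true_and, and_true] at h <;>
  omega

theorem main2 {a b : ℕ} {B C : ℤ[X]} (hB : NNcoeff B) (hC : NNcoeff C)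
    (hB4 : B.eval 1 = 4) (hC4 : C.eval 1 = 4) (hB0 : B.coeff 0 ≠ 0) (hC0 : C.coeff 0 ≠ 0)
    (h : (1 + X ^ a) * B = (1 + X ^ b) * C) (hab : a ≠ b) :
    ∃ d : ℕ, B = (1 + X ^ b) * (1 + X ^ d) ∧ C = (1 + X ^ a) * (1 + X ^ d) := by
  obtain ⟨x, y, z, hxy, hyz, rfl⟩ := form4 B hB hB4 hB0
  obtain ⟨u, v, w, huv, hvw, rfl⟩ := form4 C hC hC4 hC0
  have e : ∀ a x y z : ℕ, (1 + X ^ a) * polyOf [0, x, y, z] =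
      polyOf ([0, x, y, z] ++ [a, a + x, a + y, a + z]) := by
    intro a x y z
    simp [polyOf, pow_add]
    ring
  rw [e, e] at h
  have hk := combi hxy hyz huv hvw (polyOf_inj h) hab
  clear h hB hC hB4 hC4 hB0 hC0
  obtain ⟨rfl, rfl, h⟩ := hk
  have f : ∀ x y : ℕ, polyOf [0, x, y, x + y] = (1 + X ^ x) * (1 + X ^ y) := by
    intro x y
    simp [polyOf, pow_add]
    ring
  rw [f, f]
  rcases h with ⟨rfl, rfl, rfl⟩ | ⟨rfl, rfl, rfl⟩ | ⟨rfl, rfl, rfl⟩ | ⟨rfl, rfl, rfl⟩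
  · exact ⟨_, rfl, rfl⟩
  · exact ⟨_, rfl, mul_comm _ _⟩
  · exact ⟨_, mul_comm _ _, rfl⟩
  · exact ⟨_, mul_comm _ _, mul_comm _ _⟩

theorem two2 {a b c d : ℕ} (h : ((1 : ℤ[X]) + X ^ a) * (1 + X ^ b) = (1 + X ^ c) * (1 + X ^ d)) :
    (a = c ∧ b = d) ∨ (a = d ∧ b = c) := by
  have f : ∀ x y : ℕ, (1 + X ^ x) * (1 + X ^ y) = polyOf [0, x, y, x + y] := by
    intro x y
    simp [polyOf, pow_add]
    ring
  rw [f, f] at h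
  have key : ∀ x y : ℕ, ∃ p q, p ≤ q ∧ ((x = p ∧ y = q) ∨ (x = q ∧ y = p)) ∧
      [0, x, y, x + y].Perm [0, p, q, p + q] := by
    intro x y
    rcases le_total x y with hh | hh
    · exact ⟨x, y, hh, by simp, List.Perm.refl _⟩
    · refine ⟨y, x, hh, by simp, ?_⟩
      rw [add_comm y x]
      exact (List.Perm.swap _ _ _).cons _
  obtain ⟨p, q, hpq, h1, k1⟩ := key a b
  obtain ⟨r, s, hrs, h2, k2⟩ := key c d
  have hp := (k1.symm.trans (polyOf_inj h)).trans k2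
  have := List.Perm.eq_of_pairwise (le := (· ≤ ·)) (fun a b _ _ => le_antisymm)
    (by simp; omega) (by simp; omega) hp
  simp at this
  omega

def Good (Q : ℤ[X]) : Prop := IrredNN Q ∧ Q.coeff 0 ≠ 0

theorem one_le_eval {Q : ℤ[X]} (hQ : NNcoeff Q) (h0 : Q.coeff 0 ≠ 0) : 1 ≤ Q.eval 1 := by
  rw [eval_one_sum]
  have := Finset.single_le_sum (f := fun i => Q.coeff i) (fun i _ => hQ i) (mem_support_iff.2 h0)
  have h1 := hQ 0
  omega

theorem two_le_eval {Q : ℤ[X]} (h : Good Q) : 2 ≤ Q.eval 1 := by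
  obtain ⟨⟨hQ, h1, -⟩, h0⟩ := h
  have := one_le_eval hQ h0
  by_contra hlt
  obtain ⟨l, hl, hs, rfl⟩ := exists_sorted 1 Q hQ (by push_cast; omega)
  obtain ⟨k, rfl⟩ := List.length_eq_one_iff.1 hl
  obtain rfl := head_zero _ _ hs h0
  exact h1 (by simp [polyOf])

theorem nn_mul {S T : ℤ[X]} (hS : NNcoeff S) (hT : NNcoeff T) : NNcoeff (S * T) := by
  intro n
  rw [coeff_mul]
  exact Finset.sum_nonneg (fun i _ => mul_nonneg (hS _) (hT _))

theorem good_prod (l : List ℤ[X]) (h : ∀ Q ∈ l, Good Q) :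
    NNcoeff l.prod ∧ l.prod.coeff 0 ≠ 0 ∧ (2 : ℤ) ^ l.length ≤ l.prod.eval 1 := by
  induction l with
  | nil =>
    refine ⟨?_, by simp, by simp⟩
    intro n
    simp only [List.prod_nil, coeff_one]
    split_ifs <;> simp
  | cons Q l ih =>
    obtain ⟨i1, i2, i3⟩ := ih (fun R hR => h R (List.mem_cons_of_mem _ hR))
    have hQ := h Q List.mem_cons_self
    have h2 := two_le_eval hQ
    rw [List.prod_cons]
    refine ⟨nn_mul hQ.1.1 i1, ?_, ?_⟩
    · rw [mul_coeff_zero]; exact mul_ne_zero hQ.2 i2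
    · rw [eval_mul, List.length_cons, pow_succ, mul_comm]
      exact mul_le_mul h2 i3 (by positivity) (by omega)

/-- An irreducible polynomial has only the trivial factorization. -/
theorem single_unique {Q : ℤ[X]} {l : List ℤ[X]} (hQ : IrredNN Q) (h : ∀ R ∈ l, Good R)
    (hp : l.prod = Q) : l = [Q] := by
  match l with
  | [] => exact absurd hp.symm hQ.2.1
  | [R] => simpa using hp
  | R :: S :: t =>
    exfalso
    have ht := good_prod (S :: t) (fun T hT => h T (List.mem_cons_of_mem _ hT))
    have hR := h R List.mem_cons_self
    rw [List.prod_cons] at hp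
    rcases hQ.2.2 _ _ hR.1.1 ht.1 hp.symm with h1 | h1
    · exact hR.1.2.1 h1
    · have := ht.2.2
      rw [h1, List.length_cons, pow_succ] at this
      have h3 : (1 : ℤ) ≤ 2 ^ t.length := one_le_pow₀ (by norm_num)
      simp at this
      omega

theorem good_form2 {Q : ℤ[X]} (h : Good Q) (h2 : Q.eval 1 = 2) : ∃ a : ℕ, Q = 1 + X ^ a :=
  form2 Q h.1.1 h2 h.2

theorem len_le {l : List ℤ[X]} (h : ∀ Q ∈ l, Good Q) {n : ℕ} (he : l.prod.eval 1 = 2 ^ n) :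
    l.length ≤ n := by
  have := (good_prod l h).2.2
  rw [he] at this
  exact (pow_le_pow_iff_right₀ (by norm_num : (1 : ℤ) < 2)).1 this

theorem class4 {l : List ℤ[X]} (h : ∀ Q ∈ l, Good Q) (he : l.prod.eval 1 = 4) :
    (∃ Q, l = [Q]) ∨ ∃ a b : ℕ, l = [1 + X ^ a, 1 + X ^ b] := by
  have hl := len_le (n := 2) h (by rw [he]; norm_num)
  match l with
  | [] => simp at he
  | [Q] => exact Or.inl ⟨Q, rfl⟩
  | [Q, R] =>
    right
    have hQ := h Q (by simp)
    have hR := h R (by simp)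
    have a1 := two_le_eval hQ
    have a2 := two_le_eval hR
    simp at he
    obtain ⟨a, rfl⟩ := good_form2 hQ (by nlinarith)
    obtain ⟨b, rfl⟩ := good_form2 hR (by nlinarith)
    exact ⟨a, b, rfl⟩
  | _ :: _ :: _ :: _ => simp at hl

theorem uniq4 {l l' : List ℤ[X]} (h : ∀ Q ∈ l, Good Q) (h' : ∀ Q ∈ l', Good Q)
    (he : l.prod.eval 1 = 4) (hp : l.prod = l'.prod) : l.Perm l' := by
  rcases class4 h he with ⟨Q, rfl⟩ | ⟨a, b, rfl⟩
  · rw [single_unique (h Q (by simp)).1 h' (by simpa using hp.symm)]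
  · rcases class4 h' (hp ▸ he) with ⟨Q, rfl⟩ | ⟨c, d, rfl⟩
    · rw [single_unique (h' Q (by simp)).1 h (by simpa using hp)]
    · rcases two2 (by simpa using hp) with ⟨rfl, rfl⟩ | ⟨rfl, rfl⟩
      · exact List.Perm.refl _
      · exact List.Perm.swap _ _ _

theorem class8 {l : List ℤ[X]} (h : ∀ Q ∈ l, Good Q) (he : l.prod.eval 1 = 8) :
    (∃ Q, l = [Q]) ∨ ∃ (a : ℕ) (t : List ℤ[X]), l.Perm ((1 + X ^ a) :: t) := by
  have hl := len_le (n := 3) h (by rw [he]; norm_num)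
  match l with
  | [] => simp at he
  | [Q] => exact Or.inl ⟨Q, rfl⟩
  | [Q, R] =>
    right
    have hQ := h Q (by simp)
    have hR := h R (by simp)
    have a1 := two_le_eval hQ
    have a2 := two_le_eval hR
    simp at he
    have : Q.eval 1 = 2 ∨ R.eval 1 = 2 := by
      have h4 : Q.eval 1 ≤ 4 := by nlinarith
      generalize Q.eval 1 = q at *
      interval_cases q <;> omega
    rcases this with h2 | h2
    · obtain ⟨a, rfl⟩ := good_form2 hQ h2
      exact ⟨a, _, List.Perm.refl _⟩
    · obtain ⟨a, rfl⟩ := good_form2 hR h2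
      exact ⟨a, _, List.Perm.swap _ _ _⟩
  | [Q, R, S] =>
    right
    have hQ := h Q (by simp)
    have a1 := two_le_eval hQ
    have a2 := (good_prod [R, S] (fun T hT => h T (List.mem_cons_of_mem _ hT))).2.2
    rw [List.prod_cons, eval_mul] at he
    norm_num at a2
    simp at he
    obtain ⟨a, rfl⟩ := good_form2 hQ (by nlinarith)
    exact ⟨a, _, List.Perm.refl _⟩
  | _ :: _ :: _ :: _ :: _ => simp at hl; omega

theorem good_one_add (a : ℕ) : Good (1 + X ^ a) := by
  have e : (1 + X ^ a : ℤ[X]) = polyOf [0, a] := by simp [polyOf]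
  have hnn : NNcoeff (1 + X ^ a : ℤ[X]) := e ▸ nn_polyOf _
  have h0 : (1 + X ^ a : ℤ[X]).coeff 0 ≠ 0 := by
    rw [e, polyOf_coeff]; simp
    omega
  have hev : (1 + X ^ a : ℤ[X]).eval 1 = 2 := by simp
  have unit : ∀ S : ℤ[X], NNcoeff S → S.coeff 0 ≠ 0 → S.eval 1 = 1 → S = 1 := by
    intro Q hQ h0 h1
    obtain ⟨l, hl, hs, rfl⟩ := exists_sorted 1 Q hQ (by simpa using h1)
    obtain ⟨k, rfl⟩ := List.length_eq_one_iff.1 hl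
    obtain rfl := head_zero _ _ hs h0
    simp [polyOf]
  refine ⟨⟨hnn, ?_, ?_⟩, h0⟩
  · intro h
    rw [h] at hev
    simp at hev
  · intro S T hS hT hST
    rw [hST, mul_coeff_zero] at h0
    rw [hST, eval_mul] at hev
    have s0 := left_ne_zero_of_mul h0
    have t0 := right_ne_zero_of_mul h0
    have s1 := one_le_eval hS s0
    have t1 := one_le_eval hT t0
    by_cases hs : S.eval 1 = 1
    · exact Or.inl (unit S hS s0 hs)
    · right
      apply unit T hT t0
      have : 2 ≤ S.eval 1 := by omega
      nlinarith

theorem stmt12 (P : Polynomial ℤ) (hP : ∀ n, 0 ≤ P.coeff n)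
    (hc : P.coeff 0 ≠ 0) (hsum : P.eval 1 = 8) :
    ∀ l l' : List (Polynomial ℤ),
      (∀ Q ∈ l, IrredNN Q) → (∀ Q ∈ l', IrredNN Q) →
      l.prod = P → l'.prod = P → l.Perm l' := by
  intro l l' hl hl' hp hp'
  have good : ∀ l : List ℤ[X], (∀ Q ∈ l, IrredNN Q) → l.prod = P → ∀ Q ∈ l, Good Q := by
    intro l hl hp Q hQ
    refine ⟨hl Q hQ, fun h0 => hc ?_⟩
    obtain ⟨R, hR⟩ := List.dvd_prod hQ
    rw [← hp, hR, mul_coeff_zero, h0, zero_mul]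
  have g := good l hl hp
  have g' := good l' hl' hp'
  rcases class8 g (by rw [hp, hsum]) with ⟨Q, rfl⟩ | ⟨a, t, ht⟩
  · rw [single_unique (hl Q (by simp)) g' (by rw [hp', ← hp]; simp)]
  rcases class8 g' (by rw [hp', hsum]) with ⟨Q, rfl⟩ | ⟨b, t', ht'⟩
  · rw [single_unique (hl' Q (by simp)) g (by rw [hp, ← hp']; simp)]
  have gt : ∀ Q ∈ t, Good Q := fun Q hQ => g Q (ht.mem_iff.2 (List.mem_cons_of_mem _ hQ))
  have gt' : ∀ Q ∈ t', Good Q := fun Q hQ => g' Q (ht'.mem_iff.2 (List.mem_cons_of_mem _ hQ))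
  have e1 : (1 + X ^ a) * t.prod = P := by rw [← hp, ht.prod_eq, List.prod_cons]
  have e2 : (1 + X ^ b) * t'.prod = P := by rw [← hp', ht'.prod_eq, List.prod_cons]
  have ev : ∀ (a : ℕ) (B : ℤ[X]), (1 + X ^ a) * B = P → B.eval 1 = 4 := by
    intro a B h
    rw [← h] at hsum
    simp at hsum
    omega
  have v1 := ev _ _ e1
  have v2 := ev _ _ e2
  obtain ⟨n1, c1, -⟩ := good_prod t gt
  obtain ⟨n2, c2, -⟩ := good_prod t' gt'
  refine ht.trans (List.Perm.trans ?_ ht'.symm)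
  by_cases hab : a = b
  · subst hab
    refine List.Perm.cons _ (uniq4 gt gt' v1 ?_)
    refine mul_left_cancel₀ ?_ (e1.trans e2.symm)
    intro h0
    rw [h0, zero_mul] at e1
    rw [← e1] at hc
    simp at hc
  · obtain ⟨d, hd1, hd2⟩ := main2 n1 n2 v1 v2 c1 c2 (e1.trans e2.symm) hab
    have gg : ∀ b d : ℕ, ∀ Q ∈ [(1 + X ^ b : ℤ[X]), 1 + X ^ d], Good Q := by
      intro b d Q hQ
      simp at hQ
      rcases hQ with rfl | rfl <;> exact good_one_add _
    have p1 : t.Perm [1 + X ^ b, 1 + X ^ d] := uniq4 gt (gg b d) v1 (by simp [hd1])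
    have p2 : t'.Perm [1 + X ^ a, 1 + X ^ d] := uniq4 gt' (gg a d) v2 (by simp [hd2])
    exact (p1.cons _).trans ((List.Perm.swap _ _ _).trans (p2.symm.cons _))
end
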